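/- arXiv:0911.1417 — 2 statements merged into one kernel-verified Lean document; each statement's English description precedes it below -/
import Mathlib

section
/- Let H = Σ_{i=1}^{[(n-1)/2]} H_{2i+1} and let [x_p]_{2t+3} ∈ E_{2t+3}^{p,q} with t ≥ 1. Then there exist forms x_{p+2i} = x_{p+2i}^{(t)} ∈ Ω^{p+2i}(M) for 1 ≤ i ≤ t such that, setting x = x_p + Σ_{i=1}^{t} x_{p+2i}^{(t)} (and higher components arbitrary), the homogeneous components y_{p+2j+1} of Dx vanish for 0 ≤ j ≤ t, and the differential is given by the cup-product formula d_{2t+3}[x_p]_{2t+3} = [Σ_{i=1}^{t} H_{2i+1} ∧ x_{p+2(t−i)+2}^{(t)} + H_{2t+3} ∧ x_p]_{2t+3}. -/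
section TwistedSetup

variable {W : Type} [Ring W] [Algebra ℝ W]

/-- The filtration `K_p = ⊕_{i ≥ p} Ω^i(M)` of the (abstractly modelled) de Rham complex. -/
def Kfil (A : ℤ → Submodule ℝ W) (p : ℤ) : Submodule ℝ W :=
  ⨆ i : ℤ, ⨆ _ : p ≤ i, A i

/-- The submodule of (sums of) forms of pure parity `m (mod 2)`. -/
def ParPart (A : ℤ → Submodule ℝ W) (m : ℤ) : Submodule ℝ W :=
  ⨆ i : ℤ, ⨆ _ : i % 2 = m % 2, A i

/-- `Z_r^{p,q}`: elements of `K_p` of total parity `p + q` whose differential lies in `K_{p+r}`. -/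
def Zcyc (A : ℤ → Submodule ℝ W) (D : W →ₗ[ℝ] W) (r : ℕ) (p q : ℤ) : Submodule ℝ W :=
  Kfil A p ⊓ ParPart A (p + q) ⊓ (Kfil A (p + r)).comap D

/-- The boundaries `B_r^{p,q} = Z_{r-1}^{p+1,q-1} + D Z_{r-1}^{p-r+1,q+r-2}`. -/
def Bbd (A : ℤ → Submodule ℝ W) (D : W →ₗ[ℝ] W) (r : ℕ) (p q : ℤ) : Submodule ℝ W :=
  Zcyc A D (r - 1) (p + 1) (q - 1) ⊔ (Zcyc A D (r - 1) (p - r + 1) (q + r - 2)).map D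

/-- The page `E_r^{p,q}` of the spectral sequence of the filtered complex `(Ω^*(M), D)`. -/
abbrev Epage (A : ℤ → Submodule ℝ W) (D : W →ₗ[ℝ] W) (r : ℕ) (p q : ℤ) : Type :=
  ↥(Zcyc A D r p q) ⧸ (Bbd A D r p q).comap (Zcyc A D r p q).subtype

/-- The class `[z]_r ∈ E_r^{p,q}` of a cocycle `z ∈ Z_r^{p,q}`. -/
def pageCls (A : ℤ → Submodule ℝ W) (D : W →ₗ[ℝ] W) (r : ℕ) (p q : ℤ)
    (z : W) (hz : z ∈ Zcyc A D r p q) : Epage A D r p q :=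
  Submodule.Quotient.mk ⟨z, hz⟩

open Classical in
noncomputable def dpageCore (A : ℤ → Submodule ℝ W) (D : W →ₗ[ℝ] W) (r : ℕ) (p q : ℤ) :
    Epage A D r p q →ₗ[ℝ] Epage A D r (p + r) (q - r + 1) :=
  if h : (∀ x ∈ Zcyc A D r p q, D x ∈ Zcyc A D r (p + r) (q - r + 1)) ∧
      (∀ x ∈ Zcyc A D r p q, x ∈ Bbd A D r p q → D x ∈ Bbd A D r (p + r) (q - r + 1)) then
    Submodule.liftQ _
      (((Bbd A D r (p + r) (q - r + 1)).comap (Zcyc A D r (p + r) (q - r + 1)).subtype).mkQ.comp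
        (LinearMap.codRestrict (Zcyc A D r (p + r) (q - r + 1))
          (D.comp (Zcyc A D r p q).subtype) (fun x => h.1 x x.2)))
      (by
        intro x hx
        simp only [Submodule.mem_comap] at hx
        simp only [LinearMap.mem_ker, LinearMap.comp_apply, Submodule.mkQ_apply,
          Submodule.Quotient.mk_eq_zero, Submodule.mem_comap, LinearMap.codRestrict_apply,
          Submodule.subtype_apply]
        exact h.2 x x.2 hx)
  else 0

/-- The differential `d_r : E_r^{p,q} → E_r^{p+r,q-r+1}` of the spectral sequence,
induced by `D`. -/
noncomputable def dpage (A : ℤ → Submodule ℝ W) (D : W →ₗ[ℝ] W) (r : ℕ) (p q p' q' : ℤ)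
    (hp : p' = p + r) (hq : q' = q - r + 1) :
    Epage A D r p q →ₗ[ℝ] Epage A D r p' q' := by
  subst hp; subst hq; exact dpageCore A D r p q

end TwistedSetup

section Helpers

variable {W : Type} [Ring W] [Algebra ℝ W]

/-- The degree `k` component, as a linear map. -/
noncomputable def gcmp (A : ℤ → Submodule ℝ W) [DirectSum.Decomposition A] (k : ℤ) : W →ₗ[ℝ] W :=
  (A k).subtype ∘ₗ (DirectSum.component ℝ ℤ (fun i => A i) k) ∘ₗ
    (DirectSum.decomposeLinearEquiv A).toLinearMap

variable (A : ℤ → Submodule ℝ W) [DirectSum.Decomposition A]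

theorem gcmp_apply (k : ℤ) (w : W) : gcmp A k w = (DirectSum.decompose A w k : W) := rfl

theorem gcmp_mem (k : ℤ) (w : W) : gcmp A k w ∈ A k := by
  rw [gcmp_apply]; exact Subtype.property _

theorem gcmp_of_mem {i : ℤ} {w : W} (hw : w ∈ A i) (k : ℤ) :
    gcmp A k w = if k = i then w else 0 := by
  rw [gcmp_apply]
  split_ifs with h
  · subst h; exact DirectSum.decompose_of_mem_same A hw
  · exact DirectSum.decompose_of_mem_ne A hw (Ne.symm h)

theorem mem_iSup_iff_gcmp (P : ℤ → Prop) (w : W) :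
    w ∈ (⨆ i : ℤ, ⨆ _ : P i, A i) ↔ ∀ k, ¬ P k → gcmp A k w = 0 := by
  classical
  constructor
  · intro hw k hk
    have : (⨆ i : ℤ, ⨆ _ : P i, A i) ≤ LinearMap.ker (gcmp A k) := by
      refine iSup_le fun i => iSup_le fun hi => ?_
      intro v hv
      rw [LinearMap.mem_ker, gcmp_of_mem A hv, if_neg]
      rintro rfl; exact hk hi
    exact this hw
  · intro h
    rw [← DirectSum.sum_support_decompose A w]
    refine Submodule.sum_mem _ fun i _ => ?_
    by_cases hi : P i
    · exact Submodule.mem_iSup_of_mem i (Submodule.mem_iSup_of_mem hi (gcmp_mem A i w))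
    · have := h i hi
      rw [gcmp_apply] at this
      rw [this]; exact Submodule.zero_mem _

theorem mem_Kfil_iff (p : ℤ) (w : W) : w ∈ Kfil A p ↔ ∀ k, k < p → gcmp A k w = 0 := by
  simpa [Kfil] using mem_iSup_iff_gcmp A (fun i => p ≤ i) w

theorem mem_ParPart_iff (m : ℤ) (w : W) :
    w ∈ ParPart A m ↔ ∀ k, k % 2 ≠ m % 2 → gcmp A k w = 0 :=
  mem_iSup_iff_gcmp A (fun i => i % 2 = m % 2) w

/-- A linear map of degree `e` commutes with components up to a shift. -/
theorem gcmp_shift (e : ℤ) (f : W →ₗ[ℝ] W) (hf : ∀ i : ℤ, ∀ x ∈ A i, f x ∈ A (i + e))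
    (k : ℤ) (w : W) : gcmp A k (f w) = f (gcmp A (k - e) w) := by
  induction w using DirectSum.Decomposition.inductionOn A with
  | zero => simp
  | @homogeneous i m =>
    rw [gcmp_of_mem A (hf i m m.2), gcmp_of_mem A m.2]
    by_cases h : k = i + e
    · rw [if_pos h, if_pos (by omega)]
    · rw [if_neg h, if_neg (by omega), map_zero]
  | add a b ha hb => simp only [map_add, ha, hb]

theorem dpage_cls (D : W →ₗ[ℝ] W) (r : ℕ) (p q p' q' : ℤ)
    (hp : p' = p + r) (hq : q' = q - r + 1)
    (hDD : ∀ w, D (D w) = 0)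
    (hpar : ∀ m w, w ∈ ParPart A m → D w ∈ ParPart A (m + 1))
    (z : W) (hz : z ∈ Zcyc A D r p q) (hDz : D z ∈ Zcyc A D r p' q') :
    dpage A D r p q p' q' hp hq (pageCls A D r p q z hz) = pageCls A D r p' q' (D z) hDz := by
  subst hp; subst hq
  have h : (∀ x ∈ Zcyc A D r p q, D x ∈ Zcyc A D r (p + r) (q - r + 1)) ∧
      (∀ x ∈ Zcyc A D r p q, x ∈ Bbd A D r p q → D x ∈ Bbd A D r (p + r) (q - r + 1)) := by
    constructor
    · intro x hx
      refine ⟨⟨hx.2, ?_⟩, ?_⟩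
      · have := hpar _ _ hx.1.2
        have e : p + (r : ℤ) + (q - r + 1) = p + q + 1 := by ring
        rw [e]; exact this
      · show D (D x) ∈ Kfil A _
        rw [hDD]; exact Submodule.zero_mem _
    · intro x _ hx
      obtain ⟨a, ha, b, hb, rfl⟩ := Submodule.mem_sup.1 hx
      obtain ⟨c, hc, rfl⟩ := hb
      rw [map_add, hDD, add_zero]
      refine Submodule.mem_sup_right ⟨a, ?_, rfl⟩
      have e1 : p + (r : ℤ) - r + 1 = p + 1 := by ring
      have e2 : q - (r : ℤ) + 1 + r - 2 = q - 1 := by ring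
      rw [e1, e2]; exact ha
  show dpageCore A D r p q (pageCls A D r p q z hz) = _
  unfold dpageCore
  rw [dif_pos h]
  rfl

end Helpers

/-- Theorem 4.1 of the paper. For `H = ∑_{i=1}^{[(n-1)/2]} H_{2i+1}` and a
class `[x_p]_{2t+3} ∈ E_{2t+3}^{p,q}` (`t ≥ 1`) represented by the closed `p`-form `x`, there
exist forms `x_{p+2i} = xs i ∈ Ω^{p+2i}(M)` (`1 ≤ i ≤ t`) such that, setting
`z = x + ∑_{i=1}^t xs i` (higher components chosen to vanish), the homogeneous components
`y_{p+2j+1}` of `D z` vanish for `0 ≤ j ≤ t` (so `z ∈ Z_{2t+3}^{p,q}`), and the differential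
is given by the cup-product formula
`d_{2t+3}[x_p]_{2t+3} = [∑_{i=1}^t H_{2i+1} ∧ x_{p+2(t-i)+2} + H_{2t+3} ∧ x_p]_{2t+3}`
(the class on the right being represented by the permanent cocycle `D z`, whose leading
component is exactly that sum). -/
theorem cup_product_description_of_higher_differentials {W : Type} [Ring W] [Algebra ℝ W]
    (n : ℕ) (A : ℤ → Submodule ℝ W) [DirectSum.Decomposition A]
    (hbound : ∀ i : ℤ, i < 0 ∨ (n : ℤ) < i → A i = ⊥)
    (hmul : ∀ (i j : ℤ) (x y : W), x ∈ A i → y ∈ A j → x * y ∈ A (i + j))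
    (d : W →ₗ[ℝ] W)
    (hdmem : ∀ i : ℤ, ∀ x ∈ A i, d x ∈ A (i + 1))
    (hd2 : ∀ x : W, d (d x) = 0)
    (hleib : ∀ (i : ℤ) (x y : W), x ∈ A i →
      d (x * y) = d x * y + ((-1 : ℝ) ^ i) • (x * d y))
    (hgcomm : ∀ (i j : ℤ) (x y : W), x ∈ A i → y ∈ A j →
      x * y = ((-1 : ℝ) ^ (i * j)) • (y * x))
    (Hc : ℕ → W)
    (hHmem : ∀ i : ℕ, Hc i ∈ A (2 * (i : ℤ) + 1))
    (hHcl : ∀ i : ℕ, d (Hc i) = 0)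
    (H : W) (hHdef : H = ∑ i ∈ Finset.Icc 1 ((n - 1) / 2), Hc i)
    (D : W →ₗ[ℝ] W) (hD : ∀ w : W, D w = d w + H * w)
    (t : ℕ) (ht : 1 ≤ t) (p q : ℤ) (hq : q % 2 = 0)
    (x : W) (hxp : x ∈ A p) (hxd : d x = 0)
    (hsurv : ∃ z ∈ Zcyc A D (2 * t + 3) p q, z - x ∈ Kfil A (p + 1)) :
    ∃ xs : ℕ → W, xs 0 = x ∧
      (∀ i : ℕ, 1 ≤ i → i ≤ t → xs i ∈ A (p + 2 * i)) ∧
      (∀ j : ℕ, 1 ≤ j → j ≤ t →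
        d (xs j) + ∑ i ∈ Finset.Icc 1 j, Hc i * xs (j - i) = 0) ∧
      ∃ (hz : x + ∑ i ∈ Finset.Icc 1 t, xs i ∈ Zcyc A D (2 * t + 3) p q)
        (hDz : D (x + ∑ i ∈ Finset.Icc 1 t, xs i)
          ∈ Zcyc A D (2 * t + 3) (p + 2 * t + 3) (q - 2 * t - 2)),
        D (x + ∑ i ∈ Finset.Icc 1 t, xs i)
            - ((∑ i ∈ Finset.Icc 1 t, Hc i * xs (t - i + 1)) + Hc (t + 1) * x)
          ∈ Kfil A (p + 2 * t + 4) ∧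
        dpage A D (2 * t + 3) p q (p + 2 * t + 3) (q - 2 * t - 2)
            (by push_cast; ring) (by push_cast; ring)
            (pageCls A D (2 * t + 3) p q (x + ∑ i ∈ Finset.Icc 1 t, xs i) hz)
          = pageCls A D (2 * t + 3) (p + 2 * t + 3) (q - 2 * t - 2)
              (D (x + ∑ i ∈ Finset.Icc 1 t, xs i)) hDz := by
  classical
  -- a uniform bound for the summation range
  have hHz : ∀ i : ℕ, (n - 1) / 2 < i → Hc i = 0 := by
    intro i hi
    have h1 := hHmem i
    rw [hbound _ (Or.inr (by omega))] at h1
    simpa using h1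
  have hHN : ∀ N : ℕ, (n - 1) / 2 ≤ N → H = ∑ i ∈ Finset.Icc 1 N, Hc i := by
    intro N hN
    rw [hHdef]
    apply Finset.sum_subset (Finset.Icc_subset_Icc_right hN)
    intro i hi hi'
    simp only [Finset.mem_Icc] at hi hi'
    exact hHz i (by omega)
  obtain ⟨N, hN1, hN2⟩ : ∃ N : ℕ, (n - 1) / 2 ≤ N ∧ t + 1 ≤ N :=
    ⟨(n - 1) / 2 + t + 1, by omega, by omega⟩
  have hH := hHN N hN1
  -- components of `D w`
  have hcD : ∀ (k : ℤ) (w : W), gcmp A k (D w) =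
      d (gcmp A (k - 1) w) + ∑ i ∈ Finset.Icc 1 N, Hc i * gcmp A (k - (2 * (i : ℤ) + 1)) w := by
    intro k w
    rw [hD, hH, Finset.sum_mul, map_add, map_sum, gcmp_shift A 1 d hdmem]
    congr 1
    refine Finset.sum_congr rfl fun i _ => ?_
    exact gcmp_shift A (2 * (i : ℤ) + 1) (LinearMap.mulLeft ℝ (Hc i))
      (fun j y hy => by
        have := hmul _ _ _ _ (hHmem i) hy
        rw [add_comm] at this; exact this) k w
  have hKD : ∀ (m : ℤ) (w : W), w ∈ Kfil A m → D w ∈ Kfil A (m + 1) := by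
    intro m w hw
    rw [mem_Kfil_iff] at hw ⊢
    intro k hk
    rw [hcD, hw _ (by omega), map_zero, zero_add]
    refine Finset.sum_eq_zero fun i _ => ?_
    rw [hw _ (by omega), mul_zero]
  have hpar : ∀ (m : ℤ) (w : W), w ∈ ParPart A m → D w ∈ ParPart A (m + 1) := by
    intro m w hw
    rw [mem_ParPart_iff] at hw ⊢
    intro k hk
    rw [hcD, hw _ (by omega), map_zero, zero_add]
    refine Finset.sum_eq_zero fun i _ => ?_
    rw [hw _ (by omega), mul_zero]
  -- `D ^ 2 = 0`
  have hodd : ∀ i : ℕ, ((-1 : ℝ) ^ (2 * (i : ℤ) + 1)) = -1 := by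
    intro i
    exact Odd.neg_one_zpow ⟨i, rfl⟩
  have hHd : ∀ w, d (H * w) = - (H * d w) := by
    intro w
    rw [hH, Finset.sum_mul, Finset.sum_mul, map_sum, ← Finset.sum_neg_distrib]
    refine Finset.sum_congr rfl fun i _ => ?_
    rw [hleib _ _ _ (hHmem i), hHcl, hodd, zero_mul, zero_add, neg_one_smul]
  have hHH : H * H = 0 := by
    have h1 : H * H = - (H * H) := by
      conv_lhs => rw [hH, Finset.sum_mul_sum, Finset.sum_comm]
      conv_rhs => rw [hH, Finset.sum_mul_sum]
      rw [← Finset.sum_neg_distrib]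
      refine Finset.sum_congr rfl fun i _ => ?_
      rw [← Finset.sum_neg_distrib]
      refine Finset.sum_congr rfl fun j _ => ?_
      rw [hgcomm _ _ _ _ (hHmem j) (hHmem i), Odd.neg_one_zpow, neg_one_smul]
      exact Odd.mul ⟨j, rfl⟩ ⟨i, rfl⟩
    have h2 : (2 : ℝ) • (H * H) = 0 := by
      rw [two_smul]; nth_rewrite 1 [h1]; exact neg_add_cancel _
    exact (smul_eq_zero.1 h2).resolve_left two_ne_zero
  have hDD : ∀ w, D (D w) = 0 := by
    intro w
    rw [hD (D w), hD w, map_add, hd2, hHd, mul_add, ← mul_assoc, hHH]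
    simp
  -- the components of the given representative
  obtain ⟨z, ⟨⟨hzK, hzP⟩, hzD⟩, hzx⟩ := hsurv
  have hzD' : D z ∈ Kfil A (p + ((2 * t + 3 : ℕ) : ℤ)) := hzD
  change z ∈ Kfil A p at hzK
  change z ∈ ParPart A (p + q) at hzP
  rw [mem_Kfil_iff] at hzK hzx hzD'
  rw [mem_ParPart_iff] at hzP
  have hxz : gcmp A p z = x := by
    have := hzx p (by omega)
    rw [map_sub, gcmp_of_mem A hxp, if_pos rfl, sub_eq_zero] at this
    exact this
  have hxs0 : gcmp A (p + 2 * ((0 : ℕ) : ℤ)) z = x := by simpa using hxz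
  obtain ⟨Z, hZdef⟩ : ∃ Z, Z = x + ∑ i ∈ Finset.Icc 1 t, gcmp A (p + 2 * (i : ℤ)) z := ⟨_, rfl⟩
  have hZr : Z = ∑ i ∈ Finset.range (t + 1), gcmp A (p + 2 * (i : ℤ)) z := by
    rw [hZdef, Finset.sum_range_succ', hxs0, add_comm]
    congr 1
    rw [Finset.range_eq_Ico, Finset.sum_Ico_add' (fun i : ℕ => gcmp A (p + 2 * (i : ℤ)) z) 0 t 1]
    rfl
  have hcZ : ∀ k : ℤ, gcmp A k Z =
      ∑ i ∈ Finset.range (t + 1), if k = p + 2 * (i : ℤ) then gcmp A k z else 0 := by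
    intro k
    rw [hZr, map_sum]
    refine Finset.sum_congr rfl fun i _ => ?_
    rw [gcmp_of_mem A (gcmp_mem A _ z)]
    split_ifs with h
    · rw [h]
    · rfl
  have hcZ1 : ∀ i : ℕ, i ≤ t → gcmp A (p + 2 * (i : ℤ)) Z = gcmp A (p + 2 * (i : ℤ)) z := by
    intro i hi
    rw [hcZ, Finset.sum_eq_single_of_mem i (Finset.mem_range.2 (by omega)), if_pos rfl]
    intro j _ hj
    rw [if_neg (by omega)]
  have hcZ2 : ∀ k : ℤ, (∀ i : ℕ, i ≤ t → k ≠ p + 2 * (i : ℤ)) → gcmp A k Z = 0 := by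
    intro k hk
    rw [hcZ]
    refine Finset.sum_eq_zero fun i hi => ?_
    rw [if_neg (hk i (by have := Finset.mem_range.1 hi; omega))]
  have hZK : Z ∈ Kfil A p := by
    rw [mem_Kfil_iff]
    intro k hk
    exact hcZ2 k fun i _ => by omega
  have hZP : Z ∈ ParPart A (p + q) := by
    rw [mem_ParPart_iff]
    intro k hk
    exact hcZ2 k fun i _ => by omega
  have hdiff : z - Z ∈ Kfil A (p + 2 * t + 2) := by
    rw [mem_Kfil_iff]
    intro k hk
    rw [map_sub, sub_eq_zero]
    by_cases h : ∃ i : ℕ, i ≤ t ∧ k = p + 2 * (i : ℤ)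
    · obtain ⟨i, hi, rfl⟩ := h
      exact (hcZ1 i hi).symm
    · push Not at h
      rw [hcZ2 k h]
      by_cases hkp : k < p
      · exact hzK k hkp
      · apply hzP
        intro hk2
        exact h ((k - p) / 2).toNat (by omega) (by omega)
  have hZD : D Z ∈ Kfil A (p + 2 * t + 3) := by
    have h1 := hKD _ _ hdiff
    have e : D Z = D z - D (z - Z) := by rw [map_sub]; abel
    rw [e]
    refine Submodule.sub_mem _ ?_ ?_
    · rw [mem_Kfil_iff]
      intro k hk
      exact hzD' k (by push_cast; omega)
    · have e2 : p + 2 * (t : ℤ) + 2 + 1 = p + 2 * t + 3 := by ring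
      rw [← e2]; exact h1
  have hZZ : Z ∈ Zcyc A D (2 * t + 3) p q := by
    refine ⟨⟨hZK, hZP⟩, ?_⟩
    show D Z ∈ Kfil A (p + ((2 * t + 3 : ℕ) : ℤ))
    have e : p + ((2 * t + 3 : ℕ) : ℤ) = p + 2 * t + 3 := by push_cast; ring
    rw [e]; exact hZD
  have hDZZ : D Z ∈ Zcyc A D (2 * t + 3) (p + 2 * t + 3) (q - 2 * t - 2) := by
    refine ⟨⟨hZD, ?_⟩, ?_⟩
    · have e : p + 2 * (t : ℤ) + 3 + (q - 2 * t - 2) = p + q + 1 := by ring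
      rw [e]; exact hpar _ _ hZP
    · show D (D Z) ∈ Kfil A _
      rw [hDD]; exact Submodule.zero_mem _
  refine ⟨fun i => gcmp A (p + 2 * (i : ℤ)) z, hxs0, fun i _ _ => gcmp_mem A _ z, ?_, ?_⟩
  · intro j hj1 hjt
    have h1 := hzD' (p + 2 * (j : ℤ) + 1) (by push_cast; omega)
    rw [hcD] at h1
    rw [← h1]
    congr 1
    · show d _ = d _
      congr 2; ring_nf
    · rw [← Finset.sum_subset (Finset.Icc_subset_Icc_right (by omega : j ≤ N))]
      · refine Finset.sum_congr rfl fun i hi => ?_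
        have := (Finset.mem_Icc.1 hi).2
        have e : p + 2 * (j : ℤ) + 1 - (2 * (i : ℤ) + 1) = p + 2 * ((j - i : ℕ) : ℤ) := by omega
        rw [e]
      · intro i hi hi'
        simp only [Finset.mem_Icc] at hi hi'
        rw [hzK _ (by omega), mul_zero]
  · show ∃ (hz : x + ∑ i ∈ Finset.Icc 1 t, gcmp A (p + 2 * (i : ℤ)) z ∈ _) (hDz : _), _
    simp only [← hZdef]
    refine ⟨hZZ, hDZZ, ?_, dpage_cls A D _ _ _ _ _ _ _ hDD hpar _ _ _⟩
    have hlead : gcmp A (p + 2 * (t : ℤ) + 3) (D Z) =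
        (∑ i ∈ Finset.Icc 1 t, Hc i * gcmp A (p + 2 * ((t - i + 1 : ℕ) : ℤ)) z)
          + Hc (t + 1) * x := by
      rw [hcD, hcZ2 (p + 2 * (t : ℤ) + 3 - 1) (fun i _ => by omega), map_zero, zero_add,
        ← Finset.sum_subset (Finset.Icc_subset_Icc_right hN2),
        Finset.sum_Icc_succ_top (by omega)]
      · congr 1
        · refine Finset.sum_congr rfl fun i hi => ?_
          have := Finset.mem_Icc.1 hi
          have e : p + 2 * (t : ℤ) + 3 - (2 * (i : ℤ) + 1) = p + 2 * ((t - i + 1 : ℕ) : ℤ) := by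
            omega
          rw [e, hcZ1 _ (by omega)]
        · have e : p + 2 * (t : ℤ) + 3 - (2 * ((t + 1 : ℕ) : ℤ) + 1) = p + 2 * ((0 : ℕ) : ℤ) := by
            push_cast; ring
          rw [e, hcZ1 _ (by omega), hxs0]
      · intro i hi hi'
        simp only [Finset.mem_Icc] at hi hi'
        rw [hcZ2 _ (fun i' _ => by omega), mul_zero]
    show D Z - ((∑ i ∈ Finset.Icc 1 t, Hc i * gcmp A (p + 2 * ((t - i + 1 : ℕ) : ℤ)) z)
          + Hc (t + 1) * x) ∈ _
    rw [← hlead, mem_Kfil_iff]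
    intro k hk
    rw [map_sub, gcmp_of_mem A (gcmp_mem A _ _)]
    split_ifs with h
    · rw [h, sub_self]
    · rw [sub_zero]
      exact (mem_Kfil_iff A _ _).1 hZD k (by omega)
end

section
/- Let H = H_3 only (all other H_{2i+1} = 0) and let [x_p]_{2t+3} ∈ E_{2t+3}^{p,q} with t ≥ 1. Then d_{2t+3}[x_p]_{2t+3} = (−1)^t [⟨H_3,...,H_3,x_p⟩_A]_{2t+3}, where ⟨H_3,...,H_3,x_p⟩_A (t+1 copies of H_3) is the specific element [c(A)] of the (t+2)-fold Massey product for a defining system A obtained from the cup-product description of d_{2t+3}, and this class in E_{2t+3} is independent of the choice of such a defining system A. (This recovers the result of Atiyah and Segal.) -/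
section MasseySetup

variable {W : Type} [Ring W] [Algebra ℝ W]

/-- The degree `r_i + r_{i+1} + ⋯ + r_j - j + i` of the entry `a_{i,j}` of a defining system. -/
def masseyDeg (rdeg : ℕ → ℤ) (i j : ℕ) : ℤ := (∑ k ∈ Finset.Icc i j, rdeg k) - j + i

/-- The sign occurring in `ā_{i,j} = (-1)^{1 + deg a_{i,j}} a_{i,j}`. -/
noncomputable def barSign (rdeg : ℕ → ℤ) (i j : ℕ) : ℝ := (-1 : ℝ) ^ (1 + masseyDeg rdeg i j)

/-- `a = (a_{i,j})`, `1 ≤ i ≤ j ≤ m`, `(i,j) ≠ (1,m)`, is a defining system for the `m`-fold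
Massey product `⟨z_1, …, z_m⟩` (with `z_i` of degree `rdeg i`):  `a_{i,j}` has degree
`r_i + ⋯ + r_j - j + i`, `a_{i,i} = z_i`, and `d a_{i,j} = ∑_{r=i}^{j-1} ā_{i,r} ∧ a_{r+1,j}`. -/
def IsDefiningSystem (A : ℤ → Submodule ℝ W) (d : W →ₗ[ℝ] W) (m : ℕ) (rdeg : ℕ → ℤ)
    (z : ℕ → W) (a : ℕ → ℕ → W) : Prop :=
  (∀ i j : ℕ, 1 ≤ i → i ≤ j → j ≤ m → (i, j) ≠ (1, m) → a i j ∈ A (masseyDeg rdeg i j)) ∧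
  (∀ i : ℕ, 1 ≤ i → i ≤ m → a i i = z i) ∧
  (∀ i j : ℕ, 1 ≤ i → i ≤ j → j ≤ m → (i, j) ≠ (1, m) →
    d (a i j) = ∑ r ∈ Finset.Icc i (j - 1), (barSign rdeg i r • a i r) * a (r + 1) j)

/-- The related cocycle `c(a) = ∑_{r=1}^{m-1} ā_{1,r} ∧ a_{r+1,m}` of a defining system. -/
noncomputable def relatedCocycle (rdeg : ℕ → ℤ) (m : ℕ) (a : ℕ → ℕ → W) : W :=
  ∑ r ∈ Finset.Icc 1 (m - 1), (barSign rdeg 1 r • a 1 r) * a (r + 1) m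

end MasseySetup

section Helpers

variable {W : Type} [Ring W] [Algebra ℝ W]

theorem mem_Kfil_of (A : ℤ → Submodule ℝ W) {p i : ℤ} (h : p ≤ i) {w : W} (hw : w ∈ A i) :
    w ∈ Kfil A p :=
  (le_iSup₂_of_le (f := fun i (_ : p ≤ i) => A i) i h le_rfl) hw

theorem mem_ParPart_of (A : ℤ → Submodule ℝ W) {m i : ℤ} (h : i % 2 = m % 2) {w : W}
    (hw : w ∈ A i) : w ∈ ParPart A m :=
  (le_iSup₂_of_le (f := fun i (_ : i % 2 = m % 2) => A i) i h le_rfl) hw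

theorem ParPart_congr (A : ℤ → Submodule ℝ W) {m m' : ℤ} (h : m % 2 = m' % 2) :
    ParPart A m = ParPart A m' := by
  unfold ParPart; rw [h]

theorem map_ParPart (A : ℤ → Submodule ℝ W) (D : W →ₗ[ℝ] W)
    (hD : ∀ i, ∀ x ∈ A i, D x ∈ ParPart A (i + 1)) (m : ℤ) {x : W} (hx : x ∈ ParPart A m) :
    D x ∈ ParPart A (m + 1) := by
  have : ParPart A m ≤ (ParPart A (m + 1)).comap D := by
    refine iSup₂_le fun i hi y hy => ?_
    have h := hD i y hy
    rw [ParPart_congr A (m' := m + 1) (by omega)] at h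
    exact h
  exact this hx

theorem D_mem_Zcyc (A : ℤ → Submodule ℝ W) (D : W →ₗ[ℝ] W)
    (hD : ∀ i, ∀ x ∈ A i, D x ∈ ParPart A (i + 1)) (hDD : ∀ x, D (D x) = 0)
    (r : ℕ) (p q p' q' : ℤ) (hp : p' = p + r) (hq : q' = q - r + 1) (x : W)
    (hx : x ∈ Zcyc A D r p q) : D x ∈ Zcyc A D r p' q' := by
  obtain ⟨⟨_, h2⟩, h3⟩ := hx
  subst hp hq
  refine ⟨⟨h3, ?_⟩, ?_⟩
  · have h := map_ParPart A D hD _ h2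
    rwa [ParPart_congr A (m' := p + r + (q - r + 1)) (by ring_nf)] at h
  · show D (D x) ∈ Kfil A _
    rw [hDD]; exact zero_mem _

theorem dpage_pageCls (A : ℤ → Submodule ℝ W) (D : W →ₗ[ℝ] W)
    (hD : ∀ i, ∀ x ∈ A i, D x ∈ ParPart A (i + 1)) (hDD : ∀ x, D (D x) = 0)
    (r : ℕ) (p q p' q' : ℤ) (hp : p' = p + r) (hq : q' = q - r + 1) (x : W)
    (hx : x ∈ Zcyc A D r p q) :
    dpage A D r p q p' q' hp hq (pageCls A D r p q x hx)
      = pageCls A D r p' q' (D x) (D_mem_Zcyc A D hD hDD r p q p' q' hp hq x hx) := by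
  subst hp hq
  have h : (∀ x ∈ Zcyc A D r p q, D x ∈ Zcyc A D r (p + r) (q - r + 1)) ∧
      (∀ x ∈ Zcyc A D r p q, x ∈ Bbd A D r p q → D x ∈ Bbd A D r (p + r) (q - r + 1)) := by
    refine ⟨fun x hx => D_mem_Zcyc A D hD hDD r p q _ _ rfl rfl x hx, fun x _ hb => ?_⟩
    obtain ⟨z, hz, y, hy, rfl⟩ := Submodule.mem_sup.1 hb
    obtain ⟨u, _, rfl⟩ := hy
    refine Submodule.mem_sup_right ⟨z, ?_, by rw [map_add, hDD, add_zero]⟩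
    have e1 : p + r - r + 1 = p + 1 := by ring
    have e2 : q - r + 1 + r - 2 = q - 1 := by ring
    rw [e1, e2]; exact hz
  show dpageCore A D r p q _ = _
  unfold dpageCore
  rw [dif_pos h]
  rfl

theorem relCocycle_eq (t : ℕ) (ht : 1 ≤ t) (p : ℤ) (H3 : W) (xs : ℕ → W) (a : ℕ → ℕ → W)
    (ha1 : ∀ i : ℕ, 1 ≤ i → i ≤ t + 1 → a i i = H3)
    (ha1b : ∀ i k : ℕ, 1 ≤ i → 1 ≤ k → i + k ≤ t + 1 → a i (i + k) = 0)
    (ha2 : ∀ i : ℕ, 2 ≤ i → i ≤ t + 1 →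
      a i (t + 2) = ((-1 : ℝ) ^ (t + 2 - i)) • xs (t + 2 - i)) :
    relatedCocycle (fun i => if i ≤ t + 1 then (3 : ℤ) else p) (t + 2) a
      = ((-1 : ℝ) ^ t) • (H3 * xs t) := by
  unfold relatedCocycle
  rw [Finset.sum_eq_single_of_mem 1 (by simp)]
  · rw [ha1 1 le_rfl (by omega), ha2 2 le_rfl (by omega)]
    have : barSign (fun i => if i ≤ t + 1 then (3 : ℤ) else p) 1 1 = 1 := by
      simp [barSign, masseyDeg]
      norm_num
    rw [this]
    simp
  · intro r hr h1
    rw [Finset.mem_Icc] at hr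
    obtain ⟨k, rfl⟩ : ∃ k, r = 1 + k := ⟨r - 1, by omega⟩
    rw [ha1b 1 k le_rfl (by omega) (by omega)]
    simp

theorem D_sum (d : W →ₗ[ℝ] W) (H3 : W) (D : W →ₗ[ℝ] W) (hD : ∀ w : W, D w = d w + H3 * w)
    (xs : ℕ → W) (t : ℕ) (heq : ∀ j : ℕ, 1 ≤ j → j ≤ t → d (xs j) + H3 * xs (j - 1) = 0) :
    D (∑ i ∈ Finset.Icc 1 t, xs i) = H3 * xs t - H3 * xs 0 := by
  induction t with
  | zero => simp
  | succ t ih =>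
    rw [Finset.sum_Icc_succ_top (by omega), map_add, ih (fun j h1 h2 => heq j h1 (by omega)), hD]
    have h := heq (t + 1) (by omega) le_rfl
    rw [Nat.add_sub_cancel] at h
    rw [eq_neg_of_add_eq_zero_left h]
    abel

end Helpers

/-- the Atiyah–Segal description; Corollary 5.8 of the paper. For
`H = H_3` only and a class `[x_p]_{2t+3} ∈ E_{2t+3}^{p,q}` (`t ≥ 1`) represented by the
closed `p`-form `x`,
`d_{2t+3}[x_p]_{2t+3} = (-1)^t [⟨H_3, …, H_3, x_p⟩_A]_{2t+3}` where `⟨H_3, …, H_3, x_p⟩_A`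
(`t+1` copies of `H_3`) is the specific element `[c(A)]` of the `(t+2)`-fold Massey product
for a defining system `A` obtained from the cup-product description of `d_{2t+3}` (built from
forms `xs i` with `d(xs i) + H_3 ∧ xs(i-1) = 0`), and this class in `E_{2t+3}` is independent
of the choice of such a defining system. -/
theorem higher_differentials_are_massey_products_H3 {W : Type} [Ring W] [Algebra ℝ W]
    (n : ℕ) (A : ℤ → Submodule ℝ W) [DirectSum.Decomposition A]
    (hbound : ∀ i : ℤ, i < 0 ∨ (n : ℤ) < i → A i = ⊥)
    (hmul : ∀ (i j : ℤ) (x y : W), x ∈ A i → y ∈ A j → x * y ∈ A (i + j))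
    (d : W →ₗ[ℝ] W)
    (hdmem : ∀ i : ℤ, ∀ x ∈ A i, d x ∈ A (i + 1))
    (hd2 : ∀ x : W, d (d x) = 0)
    (hleib : ∀ (i : ℤ) (x y : W), x ∈ A i →
      d (x * y) = d x * y + ((-1 : ℝ) ^ i) • (x * d y))
    (hgcomm : ∀ (i j : ℤ) (x y : W), x ∈ A i → y ∈ A j →
      x * y = ((-1 : ℝ) ^ (i * j)) • (y * x))
    (H3 : W) (hH3mem : H3 ∈ A 3) (hH3cl : d H3 = 0)
    (D : W →ₗ[ℝ] W) (hD : ∀ w : W, D w = d w + H3 * w)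
    (t : ℕ) (ht : 1 ≤ t) (p q : ℤ) (hq : q % 2 = 0)
    (x : W) (hxp : x ∈ A p) (hxd : d x = 0)
    (xs xs' : ℕ → W) (hxs0 : xs 0 = x) (hxs0' : xs' 0 = x)
    (hxsm : ∀ i : ℕ, 1 ≤ i → i ≤ t → xs i ∈ A (p + 2 * i))
    (hxsm' : ∀ i : ℕ, 1 ≤ i → i ≤ t → xs' i ∈ A (p + 2 * i))
    (heq : ∀ j : ℕ, 1 ≤ j → j ≤ t → d (xs j) + H3 * xs (j - 1) = 0)
    (heq' : ∀ j : ℕ, 1 ≤ j → j ≤ t → d (xs' j) + H3 * xs' (j - 1) = 0)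
    (a a' : ℕ → ℕ → W)
    (ha1 : ∀ i : ℕ, 1 ≤ i → i ≤ t + 1 → a i i = H3)
    (ha1b : ∀ i k : ℕ, 1 ≤ i → 1 ≤ k → i + k ≤ t + 1 → a i (i + k) = 0)
    (ha2 : ∀ i : ℕ, 2 ≤ i → i ≤ t + 1 →
      a i (t + 2) = ((-1 : ℝ) ^ (t + 2 - i)) • xs (t + 2 - i))
    (ha3 : a (t + 2) (t + 2) = x)
    (ha1' : ∀ i : ℕ, 1 ≤ i → i ≤ t + 1 → a' i i = H3)
    (ha1b' : ∀ i k : ℕ, 1 ≤ i → 1 ≤ k → i + k ≤ t + 1 → a' i (i + k) = 0)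
    (ha2' : ∀ i : ℕ, 2 ≤ i → i ≤ t + 1 →
      a' i (t + 2) = ((-1 : ℝ) ^ (t + 2 - i)) • xs' (t + 2 - i))
    (ha3' : a' (t + 2) (t + 2) = x) :
    (∃ (hz : x + ∑ i ∈ Finset.Icc 1 t, xs i ∈ Zcyc A D (2 * t + 3) p q)
      (zc : W) (hzc : zc ∈ Zcyc A D (2 * t + 3) (p + 2 * t + 3) (q - 2 * t - 2)),
      zc - relatedCocycle (fun i => if i ≤ t + 1 then (3 : ℤ) else p) (t + 2) a
          ∈ Kfil A (p + 2 * t + 4) ∧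
      dpage A D (2 * t + 3) p q (p + 2 * t + 3) (q - 2 * t - 2)
          (by push_cast; ring) (by push_cast; ring)
          (pageCls A D (2 * t + 3) p q (x + ∑ i ∈ Finset.Icc 1 t, xs i) hz)
        = ((-1 : ℝ) ^ t) •
            pageCls A D (2 * t + 3) (p + 2 * t + 3) (q - 2 * t - 2) zc hzc) ∧
    (∀ (zc zc' : W)
      (hzc : zc ∈ Zcyc A D (2 * t + 3) (p + 2 * t + 3) (q - 2 * t - 2))
      (hzc' : zc' ∈ Zcyc A D (2 * t + 3) (p + 2 * t + 3) (q - 2 * t - 2)),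
      zc - relatedCocycle (fun i => if i ≤ t + 1 then (3 : ℤ) else p) (t + 2) a
          ∈ Kfil A (p + 2 * t + 4) →
      zc' - relatedCocycle (fun i => if i ≤ t + 1 then (3 : ℤ) else p) (t + 2) a'
          ∈ Kfil A (p + 2 * t + 4) →
      pageCls A D (2 * t + 3) (p + 2 * t + 3) (q - 2 * t - 2) zc hzc
        = pageCls A D (2 * t + 3) (p + 2 * t + 3) (q - 2 * t - 2) zc' hzc') := by
  have hHH : H3 * H3 = 0 := by
    have h := hgcomm 3 3 H3 H3 hH3mem hH3mem
    have e : ((-1 : ℝ) ^ ((3 : ℤ) * 3)) = -1 := Odd.neg_one_zpow (by decide)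
    rw [e, neg_smul, one_smul] at h
    have h2 : (2 : ℝ) • (H3 * H3) = 0 := by rw [two_smul]; nth_rewrite 1 [h]; simp
    exact (smul_eq_zero.1 h2).resolve_left (by norm_num)
  have hDD : ∀ w, D (D w) = 0 := by
    intro w
    have e : ((-1 : ℝ) ^ (3 : ℤ)) = -1 := Odd.neg_one_zpow (by decide)
    rw [hD (D w), hD w, map_add, hd2, hleib 3 H3 w hH3mem, hH3cl, mul_add, ← mul_assoc, hHH, e]
    simp
  have hDpar : ∀ i, ∀ w ∈ A i, D w ∈ ParPart A (i + 1) := by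
    intro i w hw
    rw [hD]
    exact add_mem (mem_ParPart_of A rfl (hdmem i w hw))
      (mem_ParPart_of A (by omega) (hmul 3 i _ _ hH3mem hw))
  have hc := relCocycle_eq t ht p H3 xs a ha1 ha1b ha2
  have hc' := relCocycle_eq t ht p H3 xs' a' ha1' ha1b' ha2'
  have hS := D_sum d H3 D hD xs t heq
  have hS' := D_sum d H3 D hD xs' t heq'
  have hDx : D x = H3 * x := by rw [hD, hxd, zero_add]
  have hDX : D (x + ∑ i ∈ Finset.Icc 1 t, xs i) = H3 * xs t := by
    rw [map_add, hS, hDx, hxs0]; abel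
  have hDX' : D (x + ∑ i ∈ Finset.Icc 1 t, xs' i) = H3 * xs' t := by
    rw [map_add, hS', hDx, hxs0']; abel
  have hA : H3 * xs t ∈ A (3 + (p + 2 * t)) := hmul _ _ _ _ hH3mem (hxsm t ht le_rfl)
  have hA' : H3 * xs' t ∈ A (3 + (p + 2 * t)) := hmul _ _ _ _ hH3mem (hxsm' t ht le_rfl)
  have hz : x + ∑ i ∈ Finset.Icc 1 t, xs i ∈ Zcyc A D (2 * t + 3) p q := by
    refine ⟨⟨?_, ?_⟩, ?_⟩
    · refine add_mem (mem_Kfil_of A le_rfl hxp) (sum_mem fun i hi => ?_)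
      rw [Finset.mem_Icc] at hi
      exact mem_Kfil_of A (by omega) (hxsm i hi.1 hi.2)
    · refine add_mem (mem_ParPart_of A (by omega) hxp) (sum_mem fun i hi => ?_)
      rw [Finset.mem_Icc] at hi
      exact mem_ParPart_of A (by omega) (hxsm i hi.1 hi.2)
    · show D _ ∈ Kfil A _
      rw [hDX]
      exact mem_Kfil_of A (by push_cast; omega) hA
  have hsq : ((-1 : ℝ) ^ t) * ((-1 : ℝ) ^ t) = 1 := by rw [← mul_pow]; simp
  refine ⟨⟨hz, ((-1 : ℝ) ^ t) • (H3 * xs t), ?_, ?_, ?_⟩, ?_⟩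
  · have h := D_mem_Zcyc A D hDpar hDD (2 * t + 3) p q (p + 2 * t + 3) (q - 2 * t - 2)
      (by push_cast; ring) (by push_cast; ring) _ hz
    rw [hDX] at h
    exact Submodule.smul_mem _ _ h
  · rw [hc, sub_self]; exact zero_mem _
  · rw [dpage_pageCls A D hDpar hDD]
    unfold pageCls
    rw [← Submodule.Quotient.mk_smul]
    congr 1
    apply Subtype.ext
    show D _ = ((-1 : ℝ) ^ t) • (((-1 : ℝ) ^ t) • (H3 * xs t))
    rw [hDX, smul_smul, hsq, one_smul]
  · intro zc zc' hzc hzc' h h'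
    rw [hc] at h
    rw [hc'] at h'
    unfold pageCls
    rw [Submodule.Quotient.eq]
    show zc - zc' ∈ Bbd A D _ _ _
    have hDc : D (H3 * xs t) = 0 := by rw [← hDX, hDD]
    have hDc' : D (H3 * xs' t) = 0 := by rw [← hDX', hDD]
    have e : zc - zc' = ((zc - ((-1 : ℝ) ^ t) • (H3 * xs t))
        - (zc' - ((-1 : ℝ) ^ t) • (H3 * xs' t)))
        + ((-1 : ℝ) ^ t) • (H3 * xs t - H3 * xs' t) := by
      rw [smul_sub]; abel
    rw [e]
    obtain ⟨⟨_, z2⟩, z3⟩ := hzc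
    obtain ⟨⟨_, z2'⟩, z3'⟩ := hzc'
    have z3 : D zc ∈ Kfil A _ := z3
    have z3' : D zc' ∈ Kfil A _ := z3'
    refine Submodule.add_mem_sup ⟨⟨?_, ?_⟩, ?_⟩ (Submodule.smul_mem _ _
      ⟨∑ i ∈ Finset.Icc 1 t, xs i - ∑ i ∈ Finset.Icc 1 t, xs' i, ⟨⟨?_, ?_⟩, ?_⟩, ?_⟩)
    · have e1 : p + 2 * t + 3 + 1 = p + 2 * t + 4 := by ring
      rw [e1]; exact sub_mem h h'
    · have e1 : p + 2 * t + 3 + 1 + (q - 2 * t - 2 - 1) = p + 2 * t + 3 + (q - 2 * t - 2) := by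
        ring
      rw [e1]
      exact sub_mem (sub_mem z2 (Submodule.smul_mem _ _ (mem_ParPart_of A (by omega) hA)))
        (sub_mem z2' (Submodule.smul_mem _ _ (mem_ParPart_of A (by omega) hA')))
    · show D _ ∈ Kfil A _
      rw [map_sub, map_sub, map_sub, map_smul, map_smul, hDc, hDc', smul_zero, sub_zero, sub_zero]
      have e1 : p + 2 * t + 3 + 1 + ((2 * t + 3 - 1 : ℕ) : ℤ)
          = p + 2 * t + 3 + ((2 * t + 3 : ℕ) : ℤ) := by omega
      rw [e1]
      exact sub_mem z3 z3'
    · refine sub_mem (sum_mem fun i hi => ?_) (sum_mem fun i hi => ?_) <;>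
        rw [Finset.mem_Icc] at hi
      · exact mem_Kfil_of A (by push_cast; omega) (hxsm i hi.1 hi.2)
      · exact mem_Kfil_of A (by push_cast; omega) (hxsm' i hi.1 hi.2)
    · refine sub_mem (sum_mem fun i hi => ?_) (sum_mem fun i hi => ?_) <;>
        rw [Finset.mem_Icc] at hi
      · exact mem_ParPart_of A (by push_cast; omega) (hxsm i hi.1 hi.2)
      · exact mem_ParPart_of A (by push_cast; omega) (hxsm' i hi.1 hi.2)
    · show D _ ∈ Kfil A _
      rw [map_sub, hS, hS', hxs0, hxs0', sub_sub_sub_cancel_right]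
      exact sub_mem (mem_Kfil_of A (by omega) hA) (mem_Kfil_of A (by omega) hA')
    · rw [map_sub, hS, hS', hxs0, hxs0', sub_sub_sub_cancel_right]
end
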